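/- arXiv:1402.2092 — 7 statements merged into one kernel-verified Lean document; each statement's English description precedes it below -/
import Mathlib

section
/- In the crowd-teaching setting, the surrogate objective F : 2^X → ℝ defined by F(A) = Σ_{h∈H} (P0(h) − Q(h|A)) · err(h,h*) is nonnegative, monotone, and submodular. -/
open scoped Classical BigOperators

/-!
Teaching an example `x` multiplies the weight of `h` by a factor in `[0, 1]`: the likelihood of the
true label if `h` gets `x` wrong, and `1` otherwise. So `F` is a nonnegative combination, with
coefficients `P0 h * err h`, of functions `A ↦ 1 - ∏ x ∈ A, g x` with `0 ≤ g ≤ 1`. Adding `x` to `A`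
increases such a function by `(1 - g x) * ∏ z ∈ A, g z`, which is nonnegative and antitone in `A`.
-/

section Submodular

variable {X R : Type*} [DecidableEq X]

/-- Submodularity of a set function on finite sets, in the form of diminishing returns: the marginal
gain of a new element decreases as the set grows. -/
def IsSubmodular [Sub R] [LE R] (f : Finset X → R) : Prop :=
  ∀ (A B : Finset X) (x : X), A ⊆ B → x ∉ B → f (insert x B) - f B ≤ f (insert x A) - f A

theorem IsSubmodular.const_mul [Ring R] [PartialOrder R] [IsOrderedRing R] {f : Finset X → R}
    (hf : IsSubmodular f) {c : R} (hc : 0 ≤ c) : IsSubmodular fun A => c * f A := by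
  intro A B x hAB hxB
  simp only [← mul_sub]
  exact mul_le_mul_of_nonneg_left (hf A B x hAB hxB) hc

theorem IsSubmodular.sum [AddCommGroup R] [PartialOrder R] [IsOrderedAddMonoid R] {ι : Type*}
    {s : Finset ι} {f : ι → Finset X → R} (hf : ∀ i ∈ s, IsSubmodular (f i)) :
    IsSubmodular fun A => ∑ i ∈ s, f i A := by
  intro A B x hAB hxB
  simp only [← Finset.sum_sub_distrib]
  exact Finset.sum_le_sum fun i hi => hf i hi A B x hAB hxB

end Submodular

section Coverage

variable {X R : Type*} [CommRing R]

/-- The probabilistic coverage function: the probability that at least one of the independent events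
indexed by `A` occurs, where `g x` is the probability that the event of `x` does not occur. -/
def coverage (g : X → R) (A : Finset X) : R :=
  1 - ∏ x ∈ A, g x

theorem coverage_insert_sub_coverage [DecidableEq X] (g : X → R) {A : Finset X} {x : X}
    (hx : x ∉ A) : coverage g (insert x A) - coverage g A = (1 - g x) * ∏ z ∈ A, g z := by
  rw [coverage, coverage, Finset.prod_insert hx]
  ring

variable [PartialOrder R] [IsOrderedRing R] {g : X → R}

theorem coverage_nonneg (hg0 : ∀ x, 0 ≤ g x) (hg1 : ∀ x, g x ≤ 1) (A : Finset X) :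
    0 ≤ coverage g A :=
  sub_nonneg.2 (Finset.prod_le_one (fun x _ => hg0 x) fun x _ => hg1 x)

theorem coverage_monotone (hg0 : ∀ x, 0 ≤ g x) (hg1 : ∀ x, g x ≤ 1) : Monotone (coverage g) :=
  fun _ _ hAB => sub_le_sub_left (Finset.prod_anti_set_of_le_one hg0 hg1 hAB) 1

theorem isSubmodular_coverage [DecidableEq X] (hg0 : ∀ x, 0 ≤ g x) (hg1 : ∀ x, g x ≤ 1) :
    IsSubmodular (coverage g) := by
  intro A B x hAB hxB
  rw [coverage_insert_sub_coverage g hxB, coverage_insert_sub_coverage g fun hxA => hxB (hAB hxA)]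
  exact mul_le_mul_of_nonneg_left (Finset.prod_anti_set_of_le_one hg0 hg1 hAB)
    (sub_nonneg.2 (hg1 x))

end Coverage

theorem sub_mul_prod_filter_mul_eq_coverage {X R : Type*} [CommRing R] (p c : R) (g : X → R)
    (wrong : X → Prop) [DecidablePred wrong] (A : Finset X) :
    (p - p * ∏ x ∈ A with wrong x, g x) * c =
      p * c * coverage (fun x => if wrong x then g x else 1) A := by
  rw [coverage, Finset.prod_filter]
  ring

theorem stmt_2_general {X H R : Type*} [DecidableEq X] [Fintype H]
    [CommRing R] [PartialOrder R] [IsOrderedRing R]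
    (wrong : H → X → Prop) [∀ h, DecidablePred (wrong h)]
    (likelihood : H → X → R) (hlik0 : ∀ h x, wrong h x → 0 ≤ likelihood h x)
    (hlik1 : ∀ h x, wrong h x → likelihood h x ≤ 1)
    (P0 : H → R) (hP0 : ∀ h, 0 ≤ P0 h)
    (Q : H → Finset X → R)
    (hQ : ∀ h A, Q h A = P0 h * ∏ x ∈ A with wrong h x, likelihood h x)
    (cost : H → R) (hcost : ∀ h, 0 ≤ cost h)
    (F : Finset X → R) (hF : ∀ A, F A = ∑ h, (P0 h - Q h A) * cost h) :
    (∀ A, 0 ≤ F A) ∧ Monotone F ∧ IsSubmodular F := by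
  let factor (h : H) (x : X) : R := if wrong h x then likelihood h x else 1
  have factor_nonneg (h : H) (x : X) : 0 ≤ factor h x := by
    by_cases hx : wrong h x
    · simpa only [factor, if_pos hx] using hlik0 h x hx
    · simp only [factor, if_neg hx, zero_le_one]
  have factor_le_one (h : H) (x : X) : factor h x ≤ 1 := by
    by_cases hx : wrong h x
    · simpa only [factor, if_pos hx] using hlik1 h x hx
    · simp only [factor, if_neg hx, le_refl]
  have coeff_nonneg (h : H) : 0 ≤ P0 h * cost h := mul_nonneg (hP0 h) (hcost h)
  obtain rfl : F = fun A => ∑ h, P0 h * cost h * coverage (factor h) A := by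
    funext A
    simp only [hF, hQ, sub_mul_prod_filter_mul_eq_coverage, factor]
  refine ⟨fun A => ?nonneg, fun A B hAB => ?mono, ?submodular⟩
  case nonneg =>
    exact Finset.sum_nonneg fun h _ =>
      mul_nonneg (coeff_nonneg h) (coverage_nonneg (factor_nonneg h) (factor_le_one h) A)
  case mono =>
    exact Finset.sum_le_sum fun h _ => mul_le_mul_of_nonneg_left
      (coverage_monotone (factor_nonneg h) (factor_le_one h) hAB) (coeff_nonneg h)
  case submodular =>
    exact IsSubmodular.sum fun h _ =>
      (isSubmodular_coverage (factor_nonneg h) (factor_le_one h)).const_mul (coeff_nonneg h)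

/-- In the crowd-teaching setting, the surrogate objective
`F(A) = Σ_h (P0(h) - Q(h|A)) · err(h,h*)` is nonnegative, monotone and submodular. -/
theorem stmt_2
    {X H : Type*} [Fintype X] [Nonempty X] [Fintype H]
    (hyp : H → X → ℝ) (hnz : ∀ h x, hyp h x ≠ 0)
    (y : X → ℝ) (hy : ∀ x, y x = 1 ∨ y x = -1)
    (hstar : H) (hreal : ∀ x, Real.sign (hyp hstar x) = y x)
    (P0 : H → ℝ) (hP0pos : ∀ h, 0 < P0 h) (hP0sum : ∑ h, P0 h = 1)
    (α : ℝ) (hα : 0 < α)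
    (Q : H → Finset X → ℝ)
    (hQ : ∀ h A, Q h A =
      P0 h * ∏ x ∈ A.filter (fun x => y x ≠ Real.sign (hyp h x)),
        (1 / (1 + Real.exp (-(α * hyp h x * y x)))))
    (err : H → ℝ)
    (herr : ∀ h, err h =
      ((Finset.univ.filter
        (fun x => Real.sign (hyp h x) ≠ Real.sign (hyp hstar x))).card : ℝ)
        / (Fintype.card X : ℝ))
    (F : Finset X → ℝ)
    (hF : ∀ A, F A = ∑ h, (P0 h - Q h A) * err h) :
    (∀ A : Finset X, 0 ≤ F A) ∧
    (∀ A B : Finset X, A ⊆ B → F A ≤ F B) ∧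
    (∀ (A B : Finset X) (x : X), A ⊆ B → x ∉ B →
      F (insert x B) - F B ≤ F (insert x A) - F A) := by
  simp only [one_div, ← Real.sigmoid_def] at hQ
  exact stmt_2_general _ _ (fun _ _ _ => Real.sigmoid_nonneg _) (fun _ _ _ => Real.sigmoid_le_one _)
    P0 (fun h => (hP0pos h).le) Q hQ err (fun h => herr h ▸ by positivity) F hF
end

section
/- In the crowd-teaching setting, for every A ⊆ X the expected learner error is lower-bounded by the surrogate: E[err_L|A] ≥ E[err_L] − F(A), where E[err_L] = Σ_{h∈H} P0(h)·err(h,h*) is the expected error before teaching. In particular, if E[err_L] − F(A) > ε for some ε > 0, then E[err_L|A] > ε. -/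
open scoped Classical BigOperators

/-!
`E[err_L] - F(A)` is the total error `∑ Q(h|A) err(h)` under the unnormalized posterior. Likelihoods
are at most `1`, so `Q(·|A)` lies below the prior and `Z(A) ≤ 1`; dividing by `Z(A)` can therefore
only increase the error.
-/

section Weights

variable {ι K : Type*} [Field K] [LinearOrder K] [IsStrictOrderedRing K] {s : Finset ι}

lemma sum_mul_le_sum_div_sum_mul {w loss : ι → K} (hw : ∀ i ∈ s, 0 ≤ w i)
    (hw_pos : 0 < ∑ i ∈ s, w i) (hw_le : ∑ i ∈ s, w i ≤ 1) (hloss : ∀ i ∈ s, 0 ≤ loss i) :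
    ∑ i ∈ s, w i * loss i ≤ ∑ i ∈ s, w i / (∑ j ∈ s, w j) * loss i :=
  Finset.sum_le_sum fun i hi =>
    mul_le_mul_of_nonneg_right (le_div_self (hw i hi) hw_pos hw_le) (hloss i hi)

lemma sum_mul_sub_sum_sub_mul_le_sum_div_sum_mul {p q loss : ι → K} (hp : ∑ i ∈ s, p i ≤ 1)
    (hq : ∀ i ∈ s, 0 ≤ q i) (hqp : ∀ i ∈ s, q i ≤ p i) (hq_pos : 0 < ∑ i ∈ s, q i)
    (hloss : ∀ i ∈ s, 0 ≤ loss i) :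
    ∑ i ∈ s, p i * loss i - ∑ i ∈ s, (p i - q i) * loss i ≤
      ∑ i ∈ s, q i / (∑ j ∈ s, q j) * loss i :=
  calc ∑ i ∈ s, p i * loss i - ∑ i ∈ s, (p i - q i) * loss i
      = ∑ i ∈ s, q i * loss i := by simp only [sub_mul, Finset.sum_sub_distrib, sub_sub_cancel]
    _ ≤ ∑ i ∈ s, q i / (∑ j ∈ s, q j) * loss i :=
      sum_mul_le_sum_div_sum_mul hq hq_pos ((Finset.sum_le_sum hqp).trans hp) hloss

end Weights

lemma prod_mem_Ioc_zero_one {ι R : Type*} [CommSemiring R] [PartialOrder R]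
    [IsStrictOrderedRing R] {s : Finset ι} {f : ι → R} (hf : ∀ i ∈ s, f i ∈ Set.Ioc 0 1) :
    ∏ i ∈ s, f i ∈ Set.Ioc 0 1 :=
  ⟨Finset.prod_pos fun i hi => (hf i hi).1,
    Finset.prod_le_one (fun i hi => (hf i hi).1.le) fun i hi => (hf i hi).2⟩

lemma one_div_one_add_exp_neg_mem_Ioc (t : ℝ) : 1 / (1 + Real.exp (-t)) ∈ Set.Ioc 0 1 := by
  rw [one_div, ← Real.sigmoid_def]
  exact ⟨Real.sigmoid_pos t, Real.sigmoid_le_one t⟩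

/-- `S h` stands for the taught examples whose likelihood under `h` is charged against `h`; in the
crowd-teaching setting these are the examples of `A` that `h` misclassifies. -/
theorem stmt_4_general {X H : Type*} [Fintype H]
    (P0 : H → ℝ) (hP0 : ∀ h, 0 ≤ P0 h) (hP0sum : ∑ h, P0 h = 1)
    (L : H → X → ℝ) (hL : ∀ h x, L h x ∈ Set.Ioc 0 1) (S : H → Finset X)
    (Q : H → ℝ) (hQ : ∀ h, Q h = P0 h * ∏ x ∈ S h, L h x)
    (err : H → ℝ) (herr : ∀ h, 0 ≤ err h) :
    ∑ h, P0 h * err h - ∑ h, (P0 h - Q h) * err h ≤ ∑ h, Q h / (∑ h', Q h') * err h := by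
  have likelihood_mem (h : H) : ∏ x ∈ S h, L h x ∈ Set.Ioc 0 1 :=
    prod_mem_Ioc_zero_one fun x _ => hL h x
  have Q_nonneg (h : H) : 0 ≤ Q h := hQ h ▸ mul_nonneg (hP0 h) (likelihood_mem h).1.le
  have Q_le (h : H) : Q h ≤ P0 h := hQ h ▸ mul_le_of_le_one_right (hP0 h) (likelihood_mem h).2
  have Z_pos : 0 < ∑ h, Q h := by
    obtain ⟨h, -, P0_ne_zero⟩ : ∃ h ∈ Finset.univ, P0 h ≠ 0 :=
      Finset.exists_ne_zero_of_sum_ne_zero (hP0sum ▸ one_ne_zero)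
    have Q_pos : 0 < Q h :=
      hQ h ▸ mul_pos ((hP0 h).lt_of_ne' P0_ne_zero) (likelihood_mem h).1
    exact Finset.sum_pos' (fun h _ => Q_nonneg h) ⟨h, Finset.mem_univ h, Q_pos⟩
  exact sum_mul_sub_sum_sub_mul_le_sum_div_sum_mul hP0sum.le (fun h _ => Q_nonneg h)
    (fun h _ => Q_le h) Z_pos fun h _ => herr h

/-- In the crowd-teaching setting, the expected learner error is lower-bounded by
the surrogate: `E[err_L|A] ≥ E[err_L] - F(A)`; in particular, if
`E[err_L] - F(A) > ε` then `E[err_L|A] > ε`. -/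
theorem stmt_4
    {X H : Type*} [Fintype X] [Nonempty X] [Fintype H]
    (hyp : H → X → ℝ) (hnz : ∀ h x, hyp h x ≠ 0)
    (y : X → ℝ) (hy : ∀ x, y x = 1 ∨ y x = -1)
    (hstar : H) (hreal : ∀ x, Real.sign (hyp hstar x) = y x)
    (P0 : H → ℝ) (hP0pos : ∀ h, 0 < P0 h) (hP0sum : ∑ h, P0 h = 1)
    (α : ℝ) (hα : 0 < α)
    (Q : H → Finset X → ℝ)
    (hQ : ∀ h A, Q h A =
      P0 h * ∏ x ∈ A.filter (fun x => y x ≠ Real.sign (hyp h x)),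
        (1 / (1 + Real.exp (-(α * hyp h x * y x)))))
    (Z : Finset X → ℝ) (hZ : ∀ A, Z A = ∑ h, Q h A)
    (P : H → Finset X → ℝ) (hP : ∀ h A, P h A = Q h A / Z A)
    (err : H → ℝ)
    (herr : ∀ h, err h =
      ((Finset.univ.filter
        (fun x => Real.sign (hyp h x) ≠ Real.sign (hyp hstar x))).card : ℝ)
        / (Fintype.card X : ℝ))
    (F : Finset X → ℝ)
    (hF : ∀ A, F A = ∑ h, (P0 h - Q h A) * err h)
    (Err : Finset X → ℝ)
    (hErr : ∀ A, Err A = ∑ h, P h A * err h) :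
    ∀ A : Finset X,
      ((∑ h, P0 h * err h) - F A ≤ Err A) ∧
      (∀ ε : ℝ, 0 < ε → (∑ h, P0 h * err h) - F A > ε → Err A > ε) := by
  intro A
  have err_nonneg (h : H) : 0 ≤ err h := by rw [herr]; positivity
  have bound : ∑ h, P0 h * err h - F A ≤ Err A := by
    simp only [hF, hErr, hP, hZ]
    exact stmt_4_general P0 (fun h => (hP0pos h).le) hP0sum _
      (fun h x => one_div_one_add_exp_neg_mem_Ioc (α * hyp h x * y x)) _ _ (fun h => hQ h A)
      err err_nonneg
  exact ⟨bound, fun ε _ hε => hε.trans_le bound⟩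
end

section
/- In the crowd-teaching setting, for every A ⊆ X the expected learner error satisfies the upper bound E[err_L|A] ≤ (1/P0(h*)) · (E − F(A)), where E = Σ_{h∈H} P0(h)·err(h,h*). -/
open scoped Classical BigOperators

/-!
A target that agrees with the labels shown is never penalised, so it keeps its prior mass and the
normalising constant of the posterior is at least that mass. Hence each posterior probability is at
most the unnormalised one divided by the prior of the target. Averaging the loss gives the bound,
since `E - F(A)` is the loss summed against the unnormalised posterior.
-/

section CrowdTeaching

variable {X Y H 𝕜 : Type*} [DecidableEq Y] [Field 𝕜]

/-- The learner's unnormalised posterior `Q(h|A)` after seeing the labels `y` on `A`: the prior of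
`h` is multiplied by the likelihood `lik h x` of each shown example that `h`, predicting
`pred h x`, gets wrong. Labels, predictions and likelihoods are arbitrary. -/
def unnormalizedPosterior (y : X → Y) (pred : H → X → Y) (prior : H → 𝕜) (lik : H → X → 𝕜)
    (h : H) (A : Finset X) : 𝕜 :=
  prior h * ∏ x ∈ A with y x ≠ pred h x, lik h x

/-- The learner's posterior `P(h|A)`, with the junk value `0` if the total mass vanishes. -/
def posterior [Fintype H] (y : X → Y) (pred : H → X → Y) (prior : H → 𝕜) (lik : H → X → 𝕜)
    (h : H) (A : Finset X) : 𝕜 :=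
  unnormalizedPosterior y pred prior lik h A / ∑ g, unnormalizedPosterior y pred prior lik g A

/-- The surrogate objective `F(A)` of the teacher: the loss-weighted prior mass that the
examples in `A` remove. -/
def teachingSurrogate [Fintype H] (y : X → Y) (pred : H → X → Y) (prior : H → 𝕜)
    (lik : H → X → 𝕜) (loss : H → 𝕜) (A : Finset X) : 𝕜 :=
  ∑ h, (prior h - unnormalizedPosterior y pred prior lik h A) * loss h

variable {y : X → Y} {pred : H → X → Y} {prior : H → 𝕜} {lik : H → X → 𝕜} {A : Finset X}

theorem unnormalizedPosterior_eq_prior {h : H} (hcorrect : ∀ x ∈ A, pred h x = y x) :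
    unnormalizedPosterior y pred prior lik h A = prior h := by
  have no_mistakes : A.filter (fun x => y x ≠ pred h x) = ∅ :=
    Finset.filter_eq_empty_iff.mpr fun x hx => not_not.mpr (hcorrect x hx).symm
  rw [unnormalizedPosterior, no_mistakes, Finset.prod_empty, mul_one]

theorem sum_prior_mul_loss_sub_teachingSurrogate [Fintype H] (loss : H → 𝕜) :
    ∑ h, prior h * loss h - teachingSurrogate y pred prior lik loss A =
      ∑ h, unnormalizedPosterior y pred prior lik h A * loss h := by
  simp only [teachingSurrogate, sub_mul, Finset.sum_sub_distrib, sub_sub_cancel]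

variable [LinearOrder 𝕜] [IsStrictOrderedRing 𝕜]

theorem unnormalizedPosterior_nonneg {h : H} (hprior : 0 ≤ prior h) (hlik : ∀ x, 0 ≤ lik h x) :
    0 ≤ unnormalizedPosterior y pred prior lik h A :=
  mul_nonneg hprior (Finset.prod_nonneg fun x _ => hlik x)

variable [Fintype H] {target : H}

theorem prior_le_sum_unnormalizedPosterior (hprior : ∀ h, 0 ≤ prior h)
    (hlik : ∀ h x, 0 ≤ lik h x) (hcorrect : ∀ x ∈ A, pred target x = y x) :
    prior target ≤ ∑ h, unnormalizedPosterior y pred prior lik h A :=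
  calc
    prior target = unnormalizedPosterior y pred prior lik target A :=
      (unnormalizedPosterior_eq_prior hcorrect).symm
    _ ≤ ∑ h, unnormalizedPosterior y pred prior lik h A :=
      Finset.single_le_sum (f := fun h => unnormalizedPosterior y pred prior lik h A)
        (fun h _ => unnormalizedPosterior_nonneg (hprior h) (hlik h)) (Finset.mem_univ target)

theorem posterior_le_unnormalizedPosterior_div_prior (hprior : ∀ h, 0 ≤ prior h)
    (hlik : ∀ h x, 0 ≤ lik h x) (htarget : 0 < prior target)
    (hcorrect : ∀ x ∈ A, pred target x = y x) (h : H) :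
    posterior y pred prior lik h A ≤
      unnormalizedPosterior y pred prior lik h A / prior target :=
  div_le_div_of_nonneg_left (unnormalizedPosterior_nonneg (hprior h) (hlik h)) htarget
    (prior_le_sum_unnormalizedPosterior hprior hlik hcorrect)

theorem stmt_5_general (hprior : ∀ h, 0 ≤ prior h) (hlik : ∀ h x, 0 ≤ lik h x)
    (htarget : 0 < prior target) (hcorrect : ∀ x ∈ A, pred target x = y x)
    {loss : H → 𝕜} (hloss : ∀ h, 0 ≤ loss h) :
    ∑ h, posterior y pred prior lik h A * loss h ≤
      1 / prior target *
        (∑ h, prior h * loss h - teachingSurrogate y pred prior lik loss A) :=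
  calc
    ∑ h, posterior y pred prior lik h A * loss h
      ≤ ∑ h, unnormalizedPosterior y pred prior lik h A / prior target * loss h :=
      Finset.sum_le_sum fun h _ => mul_le_mul_of_nonneg_right
        (posterior_le_unnormalizedPosterior_div_prior hprior hlik htarget hcorrect h) (hloss h)
    _ = 1 / prior target * ∑ h, unnormalizedPosterior y pred prior lik h A * loss h := by
      rw [Finset.mul_sum]
      exact Finset.sum_congr rfl fun h _ => by ring
    _ = 1 / prior target *
          (∑ h, prior h * loss h - teachingSurrogate y pred prior lik loss A) := by
      rw [sum_prior_mul_loss_sub_teachingSurrogate]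

end CrowdTeaching

/-- In the crowd-teaching setting, the expected learner error is upper bounded by
`(1/P0(h*)) · (E - F(A))`, where `E = Σ_h P0(h)·err(h,h*)`. -/
theorem stmt_5
    {X H : Type*} [Fintype X] [Nonempty X] [Fintype H]
    (hyp : H → X → ℝ) (hnz : ∀ h x, hyp h x ≠ 0)
    (y : X → ℝ) (hy : ∀ x, y x = 1 ∨ y x = -1)
    (hstar : H) (hreal : ∀ x, Real.sign (hyp hstar x) = y x)
    (P0 : H → ℝ) (hP0pos : ∀ h, 0 < P0 h) (hP0sum : ∑ h, P0 h = 1)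
    (α : ℝ) (hα : 0 < α)
    (Q : H → Finset X → ℝ)
    (hQ : ∀ h A, Q h A =
      P0 h * ∏ x ∈ A.filter (fun x => y x ≠ Real.sign (hyp h x)),
        (1 / (1 + Real.exp (-(α * hyp h x * y x)))))
    (Z : Finset X → ℝ) (hZ : ∀ A, Z A = ∑ h, Q h A)
    (P : H → Finset X → ℝ) (hP : ∀ h A, P h A = Q h A / Z A)
    (err : H → ℝ)
    (herr : ∀ h, err h =
      ((Finset.univ.filter
        (fun x => Real.sign (hyp h x) ≠ Real.sign (hyp hstar x))).card : ℝ)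
        / (Fintype.card X : ℝ))
    (F : Finset X → ℝ)
    (hF : ∀ A, F A = ∑ h, (P0 h - Q h A) * err h)
    (Err : Finset X → ℝ)
    (hErr : ∀ A, Err A = ∑ h, P h A * err h) :
    ∀ A : Finset X,
      Err A ≤ (1 / P0 hstar) * ((∑ h, P0 h * err h) - F A) := by
  intro A
  obtain rfl : Q = unnormalizedPosterior y (fun h x => Real.sign (hyp h x)) P0
      (fun h x => 1 / (1 + Real.exp (-(α * hyp h x * y x)))) := funext₂ hQ
  rw [hErr, hF]
  simp only [hP, hZ]
  exact stmt_5_general (fun h => (hP0pos h).le) (fun h x => by positivity) (hP0pos hstar)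
    (fun x _ => hreal x) (fun h => by rw [herr]; positivity)
end

section
/- In the teacher-update setting, for any sequence of examples and any 0 ≤ w_o < 1, the error ratios η_t are nonnegative and nonincreasing: for all s ≥ t ≥ 0, 0 ≤ η_s ≤ η_t ≤ η_0 = (1 − P0(h*)) / P0(h*). -/
open scoped Classical BigOperators

/-!
Each update multiplies the posterior by weights in `[0, 1]` that equal `1` at the target and then
renormalizes. The normalizing constant is at most the previous total mass `1`, so the mass of the
target can only grow; the error ratio `(1 - x) / x = x⁻¹ - 1` is antitone in that mass `x`.
For an infinite hypothesis class, comparison with the previous posterior makes the reweighted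
masses summable.
-/

/-- A probability vector on a discrete, possibly infinite, type: nonnegative real masses with
sum `1`. Stated through `HasSum` so that summability is part of the notion. -/
structure IsProbVector {H : Type*} (q : H → ℝ) : Prop where
  nonneg : ∀ h, 0 ≤ q h
  hasSum : HasSum q 1

/-- The Bayes-type update of the masses `q` by the weights `w`: multiply pointwise and divide by
the total mass. It is the zero function when the reweighted masses are not summable or have sum
`0`. -/
noncomputable def reweight {H : Type*} (q w : H → ℝ) (h : H) : ℝ :=
  q h * w h / ∑' h', q h' * w h'

namespace IsProbVector

variable {H : Type*} {q w : H → ℝ} {h : H}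

theorem le_one (hq : IsProbVector q) (h : H) : q h ≤ 1 :=
  le_hasSum hq.hasSum h fun i _ ↦ hq.nonneg i

theorem mul_weight_nonneg (hq : IsProbVector q) (hw : ∀ i, w i ∈ Set.Icc 0 1) (i : H) :
    0 ≤ q i * w i :=
  mul_nonneg (hq.nonneg i) (hw i).1

theorem mul_weight_le (hq : IsProbVector q) (hw : ∀ i, w i ∈ Set.Icc 0 1) (i : H) :
    q i * w i ≤ q i :=
  mul_le_of_le_one_right (hq.nonneg i) (hw i).2

theorem summable_mul (hq : IsProbVector q) (hw : ∀ i, w i ∈ Set.Icc 0 1) :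
    Summable fun i ↦ q i * w i :=
  hq.hasSum.summable.of_nonneg_of_le (hq.mul_weight_nonneg hw) (hq.mul_weight_le hw)

theorem tsum_mul_le_one (hq : IsProbVector q) (hw : ∀ i, w i ∈ Set.Icc 0 1) :
    ∑' i, q i * w i ≤ 1 :=
  hasSum_le (hq.mul_weight_le hw) (hq.summable_mul hw).hasSum hq.hasSum

theorem tsum_mul_pos (hq : IsProbVector q) (hw : ∀ i, w i ∈ Set.Icc 0 1)
    (hqh : 0 < q h) (hwh : 0 < w h) : 0 < ∑' i, q i * w i :=
  (hq.summable_mul hw).tsum_pos (hq.mul_weight_nonneg hw) h (mul_pos hqh hwh)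

theorem isProbVector_reweight (hq : IsProbVector q) (hw : ∀ i, w i ∈ Set.Icc 0 1)
    (hZ : 0 < ∑' i, q i * w i) : IsProbVector (reweight q w) where
  nonneg i := div_nonneg (hq.mul_weight_nonneg hw i) hZ.le
  hasSum := div_self hZ.ne' ▸ (hq.summable_mul hw).hasSum.div_const _

theorem le_reweight (hq : IsProbVector q) (hw : ∀ i, w i ∈ Set.Icc 0 1)
    (hqh : 0 < q h) (hwh : w h = 1) : q h ≤ reweight q w h := by
  have hZ : 0 < ∑' i, q i * w i := hq.tsum_mul_pos hw hqh (hwh ▸ one_pos)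
  rw [reweight, hwh, mul_one]
  exact le_div_self hqh.le hZ (hq.tsum_mul_le_one hw)

end IsProbVector

section IteratedReweight

variable {H : Type*} {p w : ℕ → H → ℝ} {h : H}

theorem isProbVector_and_pos_of_reweight (hp0 : IsProbVector (p 0)) (hpos : 0 < p 0 h)
    (hw : ∀ t i, w t i ∈ Set.Icc 0 1) (hwh : ∀ t, w t h = 1)
    (hp : ∀ t, p (t + 1) = reweight (p t) (w t)) (t : ℕ) :
    IsProbVector (p t) ∧ 0 < p t h := by
  induction t with
  | zero => exact ⟨hp0, hpos⟩
  | succ t ih =>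
    obtain ⟨hprob, hpos_t⟩ := ih
    rw [hp]
    have hZ := hprob.tsum_mul_pos (hw t) hpos_t (hwh t ▸ one_pos)
    exact ⟨hprob.isProbVector_reweight (hw t) hZ,
      hpos_t.trans_le (hprob.le_reweight (hw t) hpos_t (hwh t))⟩

theorem monotone_of_reweight (hp0 : IsProbVector (p 0)) (hpos : 0 < p 0 h)
    (hw : ∀ t i, w t i ∈ Set.Icc 0 1) (hwh : ∀ t, w t h = 1)
    (hp : ∀ t, p (t + 1) = reweight (p t) (w t)) : Monotone fun t ↦ p t h := by
  refine monotone_nat_of_le_succ fun t ↦ ?_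
  obtain ⟨hprob, hpos_t⟩ := isProbVector_and_pos_of_reweight hp0 hpos hw hwh hp t
  rw [hp]
  exact hprob.le_reweight (hw t) hpos_t (hwh t)

end IteratedReweight

theorem antitoneOn_one_sub_div_self {K : Type*} [Field K] [LinearOrder K]
    [IsStrictOrderedRing K] : AntitoneOn (fun x : K ↦ (1 - x) / x) (Set.Ioi 0) := by
  intro x (hx : 0 < x) y (hy : 0 < y) hxy
  simp only [sub_div, one_div, div_self hx.ne', div_self hy.ne']
  gcongr

theorem stmt_11_general {H : Type*} (hstar : H)
    (P0 : H → ℝ) (hP0 : IsProbVector P0) (hP0star : 0 < P0 hstar)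
    (w : ℕ → H → ℝ) (hw : ∀ t h, w t h ∈ Set.Icc 0 1) (hwstar : ∀ t, w t hstar = 1)
    (p : ℕ → H → ℝ) (hp0 : p 0 = P0) (hp : ∀ t, p (t + 1) = reweight (p t) (w t))
    (η : ℕ → ℝ) (hη : ∀ t, η t = (1 - p t hstar) / p t hstar) :
    η 0 = (1 - P0 hstar) / P0 hstar ∧
    ∀ t s : ℕ, t ≤ s → 0 ≤ η s ∧ η s ≤ η t := by
  subst hp0
  have hinv := isProbVector_and_pos_of_reweight hP0 hP0star hw hwstar hp
  refine ⟨hη 0, fun t s hts ↦ ?_⟩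
  rw [hη, hη]
  exact ⟨div_nonneg (sub_nonneg.2 ((hinv s).1.le_one hstar)) (hinv s).2.le,
    antitoneOn_one_sub_div_self (hinv t).2 (hinv s).2
      (monotone_of_reweight hP0 hP0star hw hwstar hp hts)⟩

theorem sign_mul_sign_le_one (a b : ℝ) : Real.sign a * Real.sign b ≤ 1 := by
  rcases Real.sign_apply_eq a with ha | ha | ha <;>
    rcases Real.sign_apply_eq b with hb | hb | hb <;> norm_num [ha, hb]

theorem sign_mul_sign_self {a : ℝ} (ha : a ≠ 0) : Real.sign a * Real.sign a = 1 := by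
  rcases Real.sign_apply_eq_of_ne_zero a ha with h | h <;> norm_num [h]

theorem rpow_half_one_sub_mem_Icc {x ξ : ℝ} (hx : x ∈ Set.Icc 0 1) (hξ : ξ ≤ 1) :
    x ^ ((1 - ξ) / 2) ∈ Set.Icc 0 1 :=
  ⟨Real.rpow_nonneg hx.1 _, Real.rpow_le_one hx.1 hx.2 (by linarith)⟩

/-- The teacher's error ratios `η_t = (1 - p_t(h*))/p_t(h*)` are nonnegative and
nonincreasing, starting from `η_0 = (1 - P0(h*))/P0(h*)`. -/
theorem stmt_11
    {X H : Type*} [Fintype H]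
    (hyp : H → X → ℝ) (hnz : ∀ h x, hyp h x ≠ 0)
    (hstar : H)
    (P0 : H → ℝ) (hP0pos : ∀ h, 0 < P0 h) (hP0sum : ∑ h, P0 h = 1)
    (w_o : ℝ) (hw0 : 0 ≤ w_o) (hw1 : w_o < 1)
    (ex : ℕ → X)
    (ξ : ℕ → H → ℝ)
    (hξ : ∀ t h, ξ t h = Real.sign (hyp h (ex t)) * Real.sign (hyp hstar (ex t)))
    (p : ℕ → H → ℝ) (hp0 : ∀ h, p 0 h = P0 h)
    (hprec : ∀ (t : ℕ) (h : H),
      p (t + 1) h = p t h * w_o ^ ((1 - ξ (t + 1) h) / 2)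
        / ∑ h', p t h' * w_o ^ ((1 - ξ (t + 1) h') / 2))
    (η : ℕ → ℝ)
    (hη : ∀ t : ℕ, η t = (1 - p t hstar) / p t hstar) :
    η 0 = (1 - P0 hstar) / P0 hstar ∧
    ∀ t s : ℕ, t ≤ s → 0 ≤ η s ∧ η s ≤ η t := by
  refine stmt_11_general hstar P0
    ⟨fun h ↦ (hP0pos h).le, hP0sum ▸ hasSum_fintype P0⟩ (hP0pos hstar)
    (fun t h ↦ w_o ^ ((1 - ξ (t + 1) h) / 2))
    (fun t h ↦ rpow_half_one_sub_mem_Icc ⟨hw0, hw1.le⟩ (hξ _ h ▸ sign_mul_sign_le_one _ _))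
    (fun t ↦ by simp [hξ, sign_mul_sign_self (hnz _ _)])
    p (funext hp0) (fun t ↦ funext fun h ↦ ?_) η hη
  rw [hprec, reweight, tsum_fintype]
end

section
/- (Ham-sandwich lemma for hyperplane arrangements.) Let h_1, …, h_n : ℝ^d → ℝ be non-constant affine functions whose zero sets (hyperplanes) are pairwise distinct. Call a sign vector σ ∈ {−1,+1}^n realized if there exists x ∈ ℝ^d with σ_i · h_i(x) > 0 for all i, and call two realized sign vectors neighboring if they differ in exactly one coordinate. Then for every probability vector p ∈ ℝ^n (p_i ≥ 0, Σ_i p_i = 1), at least one of the following holds: (1) there is a realized sign vector σ with Σ_i p_i σ_i = 0; or (2) there are neighboring realized sign vectors σ and σ' with Σ_i p_i σ_i > 0 and Σ_i p_i σ'_i < 0. -/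
open scoped Classical BigOperators

/-!
Restrict the arrangement to a generic line: it crosses every hyperplane, and the crossing points are
pairwise distinct. Far out in the two opposite directions the line lies in opposite cells, so unless
some mass vanishes, two cells on the line have masses of opposite strict signs. As long as two such
cells are separated by more than one hyperplane, a cell met in between replaces one of them.
-/

open SignType (sign)

section Bisection

variable {X ι M : Type*} [LinearOrder M] [Zero M]

theorem exists_pos_neg_card_separating_eq_one (sep : X → X → Finset ι) (m : X → M)
    (hm : ∀ x, m x ≠ 0) (hsep : ∀ x y, sep x y = ∅ → m x = m y)
    (hsplit : ∀ x y, 1 < (sep x y).card → ∃ z, sep x z ⊂ sep x y ∧ sep z y ⊂ sep x y)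
    {x y : X} (hx : 0 < m x) (hy : m y < 0) :
    ∃ x y, 0 < m x ∧ m y < 0 ∧ (sep x y).card = 1 := by
  induction hs : sep x y using Finset.strongInduction generalizing x y with
  | H s ih =>
    subst hs
    have hne : (sep x y).card ≠ 0 := fun h ↦
      (hy.trans hx).ne (hsep x y (Finset.card_eq_zero.1 h)).symm
    obtain hone | hmany : (sep x y).card = 1 ∨ 1 < (sep x y).card := by lia
    · exact ⟨x, y, hx, hy, hone⟩
    · obtain ⟨z, hxz, hzy⟩ := hsplit x y hmany
      rcases (hm z).lt_or_gt with hz | hz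
      · exact ih _ hxz hx hz rfl
      · exact ih _ hzy hz hy rfl

end Bisection

section GenericPosition

variable {ι K V P : Type*} [Finite ι] [Field K] [AddCommGroup V] [Module K V] [AddTorsor V P]

theorem exists_forall_affineMap_apply_ne_zero [Infinite K] (g : ι → P →ᵃ[K] K)
    (hg : ∀ i, ∃ x, g i x ≠ 0) : ∃ x, ∀ i, g i x ≠ 0 := by
  obtain ⟨o⟩ : Nonempty P := inferInstance
  -- A vector `(v, s)` with `s ≠ 0` off the kernels of all the homogenized maps can be scaled to
  -- `s = 1`, where these maps take the values of the `g i`.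
  let homogenized (i : ι) : Module.Dual K (V × K) :=
    (g i).linear.coprod (LinearMap.toSpanSingleton K K (g i o))
  let functional (i : Option ι) : Module.Dual K (V × K) :=
    i.elim (LinearMap.snd K V K) homogenized
  obtain ⟨⟨v, s⟩, hvs⟩ := Module.Dual.exists_forall_ne_zero_of_forall_exists functional <| by
    rintro (_ | i)
    · exact ⟨(0, 1), one_ne_zero⟩
    · obtain ⟨x, hx⟩ := hg i
      exact ⟨(x -ᵥ o, 1), by simpa [functional, homogenized] using hx⟩
  have hs : s ≠ 0 := hvs none
  refine ⟨s⁻¹ • v +ᵥ o, fun i hi ↦ hvs (some i) ?_⟩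
  calc functional (some i) (v, s) = s * g i (s⁻¹ • v +ᵥ o) := by
        simp [functional, homogenized, mul_add, hs]
    _ = 0 := by rw [hi, mul_zero]

theorem exists_injective_neg_apply_div [Infinite K] (f : ι → P →ᵃ[K] K) {a : ι → K}
    (ha : ∀ i, a i ≠ 0) (hdist : Pairwise fun i j ↦ {x | f i x = 0} ≠ {x | f j x = 0}) :
    ∃ o, Function.Injective fun i ↦ -f i o / a i := by
  obtain ⟨o, ho⟩ := exists_forall_affineMap_apply_ne_zero
    (fun ij : {ij : ι × ι // ij.1 ≠ ij.2} ↦ a ij.1.2 • f ij.1.1 - a ij.1.1 • f ij.1.2) <| by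
      rintro ⟨⟨i, j⟩, hij⟩
      by_contra! hzero
      refine hdist hij (Set.ext fun x ↦ ?_)
      have hx : a j * f i x = a i * f j x := by simpa [sub_eq_zero] using hzero x
      simpa [ha] using congrArg (· = 0) hx
  refine ⟨o, fun i j hij ↦ ?_⟩
  by_contra hne
  refine ho ⟨(i, j), hne⟩ ?_
  have hcross : f i o * a j = f j o * a i := by
    simpa [neg_div, div_eq_div_iff, ha] using hij
  simpa [sub_eq_zero, mul_comm] using hcross

end GenericPosition

section Signs

theorem coe_sign_eq_one_or_neg_one {R : Type*} [Ring R] [LinearOrder R] {a : R} (ha : a ≠ 0) :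
    (sign a : R) = 1 ∨ (sign a : R) = -1 := by
  rcases ha.lt_or_gt with h | h <;> simp [h]

theorem coe_sign_mul_self_pos {R : Type*} [Ring R] [LinearOrder R] [IsStrictOrderedRing R] {a : R}
    (ha : a ≠ 0) : 0 < (sign a : R) * a := by
  rw [sign_mul_self]
  exact abs_pos.2 ha

theorem signType_coe_injective {R : Type*} [Ring R] [CharZero R] :
    Function.Injective ((↑) : SignType → R) := by
  rintro (_ | _ | _) (_ | _ | _) h <;>
    simp_all [eq_neg_iff_add_eq_zero, neg_eq_iff_add_eq_zero, one_add_one_eq_two]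

theorem sign_sub_ne_sign_sub_iff {G : Type*} [AddCommGroup G] [LinearOrder G] [IsOrderedAddMonoid G]
    {t u v : G} (hu : u ≠ t) (hv : v ≠ t) :
    sign (u - t) ≠ sign (v - t) ↔ t ∈ Set.uIoo u v := by
  rcases hu.lt_or_gt with hu | hu <;> rcases hv.lt_or_gt with hv | hv <;>
    simp [Set.uIoo, hu, hv, sign_pos, sign_neg, not_lt_of_gt]

end Signs

section Thresholds

variable {ι α : Type*} [Fintype ι] [LinearOrder α]

/-- The indices `i` whose threshold `t i` lies strictly between `u` and `v`, in either order: on a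
line that crosses the `i`-th hyperplane at parameter `t i`, these are the hyperplanes separating the
points at parameters `u` and `v`. -/
noncomputable def indicesBetween (t : ι → α) (u v : α) : Finset ι := {i | t i ∈ Set.uIoo u v}

variable {t : ι → α} {u v z : α} {i : ι}

theorem mem_indicesBetween :
    i ∈ indicesBetween t u v ↔ u < t i ∧ t i < v ∨ v < t i ∧ t i < u := by
  grind [indicesBetween, Set.uIoo]

theorem indicesBetween_comm : indicesBetween t u v = indicesBetween t v u := by
  simp only [indicesBetween, Set.uIoo_comm]

theorem indicesBetween_ssubset (hz : z ∈ Set.uIcc u v) (hi : i ∈ indicesBetween t z v) :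
    indicesBetween t u z ⊂ indicesBetween t u v := by
  have hsub : indicesBetween t u z ⊆ indicesBetween t u v := fun k hk ↦ by
    grind [mem_indicesBetween, Set.mem_uIcc]
  refine (Finset.ssubset_iff_of_subset hsub).2 ⟨i, ?_, ?_⟩ <;>
    grind [mem_indicesBetween, Set.mem_uIcc]

theorem exists_indicesBetween_ssubset [DenselyOrdered α] (ht : Function.Injective t)
    (huv : 1 < (indicesBetween t u v).card) :
    ∃ z, (∀ i, z ≠ t i) ∧ indicesBetween t u z ⊂ indicesBetween t u v ∧
      indicesBetween t z v ⊂ indicesBetween t u v := by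
  obtain ⟨i, hi, j, hj, hij⟩ := Finset.one_lt_card.1 huv
  wlog hlt : t i < t j generalizing i j
  · exact this j hj i hi hij.symm ((ht.ne hij).lt_of_le' (not_lt.1 hlt))
  obtain ⟨z, ⟨hiz, hzj⟩, hzt⟩ := (Set.Ioo_infinite hlt).exists_notMem_finite (Set.finite_range t)
  rw [mem_indicesBetween] at hi hj
  have hz : z ∈ Set.uIcc u v := by grind [Set.mem_uIcc]
  obtain ⟨⟨k, hk⟩, ⟨l, hl⟩⟩ :
      (∃ k, k ∈ indicesBetween t u z) ∧ ∃ l, l ∈ indicesBetween t z v := by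
    simp only [mem_indicesBetween]
    rcases lt_or_ge u v with huv | hvu
    · exact ⟨⟨i, .inl ⟨by grind, hiz⟩⟩, ⟨j, .inl ⟨hzj, by grind⟩⟩⟩
    · exact ⟨⟨j, .inr ⟨hzj, by grind⟩⟩, ⟨i, .inr ⟨by grind, hiz⟩⟩⟩
  refine ⟨z, fun k hk ↦ hzt ⟨k, hk.symm⟩, indicesBetween_ssubset hz hl, ?_⟩
  rw [indicesBetween_comm (u := z), indicesBetween_comm (u := u)]
  exact indicesBetween_ssubset (Set.uIcc_comm u v ▸ hz) (by rwa [indicesBetween_comm])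

end Thresholds

section HamSandwich

variable {ι R : Type*} [Fintype ι] [Ring R] [LinearOrder R]

/-- The signed `p`-mass `∑ i, p i * σ i` of the sign vector `σ` of `y`, where `y i` is the value of
the `i`-th function at a point. A coordinate with `y i = 0` does not contribute. -/
def signedMass (p y : ι → R) : R := ∑ i, p i * sign (y i)

/-- The alternative in the ham-sandwich lemma for functions `f i` on `X`: a cell of mass zero, or
two neighboring cells with masses of opposite strict signs. A realized sign vector is represented by
a point of `X` realizing it. -/
def HasBalancedCellOrWall {X : Type*} (p : ι → R) (f : ι → X → R) : Prop :=
  (∃ x, (∀ i, f i x ≠ 0) ∧ signedMass p (f · x) = 0) ∨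
  ∃ x y, (∀ i, f i x ≠ 0) ∧ (∀ i, f i y ≠ 0) ∧ (∃! i, sign (f i x) ≠ sign (f i y)) ∧
    0 < signedMass p (f · x) ∧ signedMass p (f · y) < 0

theorem HasBalancedCellOrWall.of_comp {X Y : Type*} {p : ι → R} {f : ι → X → R} (φ : Y → X)
    (h : HasBalancedCellOrWall p fun i y ↦ f i (φ y)) : HasBalancedCellOrWall p f := by
  rcases h with ⟨x, hx⟩ | ⟨x, y, hxy⟩
  · exact .inl ⟨φ x, hx⟩
  · exact .inr ⟨φ x, φ y, hxy⟩

variable [IsStrictOrderedRing R]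

theorem signedMass_mul (p a y : ι → R) :
    signedMass p (fun i ↦ a i * y i) = signedMass (fun i ↦ p i * sign (a i)) y := by
  simp [signedMass, sign_mul, mul_assoc]

theorem HasBalancedCellOrWall.const_mul {X : Type*} {p a : ι → R} {f : ι → X → R}
    (ha : ∀ i, a i ≠ 0) (h : HasBalancedCellOrWall (fun i ↦ p i * sign (a i)) f) :
    HasBalancedCellOrWall p fun i x ↦ a i * f i x := by
  simpa [HasBalancedCellOrWall, signedMass_mul, sign_mul, ha] using h

theorem exists_signedMass_sub_eq_neg (q t : ι → R) :
    ∃ u v, (∀ i, u ≠ t i) ∧ (∀ i, v ≠ t i) ∧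
      signedMass q (u - t ·) = -signedMass q (v - t ·) := by
  obtain ⟨B, hB⟩ := (Set.finite_range t).bddAbove
  obtain ⟨b, hb⟩ := (Set.finite_range t).bddBelow
  have hB' i : t i < B + 1 := (hB ⟨i, rfl⟩).trans_lt (lt_add_one B)
  have hb' i : b - 1 < t i := (sub_one_lt b).trans_le (hb ⟨i, rfl⟩)
  refine ⟨B + 1, b - 1, fun i ↦ (hB' i).ne', fun i ↦ (hb' i).ne, ?_⟩
  simp [signedMass, sign_pos, sign_neg, hB', hb']

theorem hasBalancedCellOrWall_sub [DenselyOrdered R] (q : ι → R) {t : ι → R}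
    (ht : Function.Injective t) : HasBalancedCellOrWall q fun i u ↦ u - t i := by
  refine or_iff_not_imp_left.2 fun hzero ↦ ?_
  let X := {u : R // ∀ i, u ≠ t i}
  let mass (u : X) : R := signedMass q (u.1 - t ·)
  have hmass (u : X) : mass u ≠ 0 := fun h ↦ hzero ⟨u, fun i ↦ sub_ne_zero.2 (u.2 i), h⟩
  let sep (u v : X) : Finset ι := indicesBetween t u v
  have hsep (u v : X) (i : ι) : sign (u.1 - t i) ≠ sign (v.1 - t i) ↔ i ∈ sep u v := by
    simpa [sep, indicesBetween] using sign_sub_ne_sign_sub_iff (u.2 i) (v.2 i)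
  have hmass_eq (u v : X) (huv : sep u v = ∅) : mass u = mass v := by
    have hsign i : sign (u.1 - t i) = sign (v.1 - t i) := by
      simpa [huv] using hsep u v i
    simp [mass, signedMass, hsign]
  have hsplit (u v : X) (huv : 1 < (sep u v).card) :
      ∃ z, sep u z ⊂ sep u v ∧ sep z v ⊂ sep u v := by
    obtain ⟨z, hz, huz, hzv⟩ := exists_indicesBetween_ssubset ht huv
    exact ⟨⟨z, hz⟩, huz, hzv⟩
  obtain ⟨x, y, hx, hy⟩ : ∃ x y : X, 0 < mass x ∧ mass y < 0 := by
    obtain ⟨u, v, hu, hv, huv⟩ := exists_signedMass_sub_eq_neg q t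
    have hopp : mass ⟨u, hu⟩ = -mass ⟨v, hv⟩ := huv
    rcases (hmass ⟨u, hu⟩).lt_or_gt with h | h
    · exact ⟨⟨v, hv⟩, ⟨u, hu⟩, neg_neg_iff_pos.1 (hopp ▸ h), h⟩
    · exact ⟨⟨u, hu⟩, ⟨v, hv⟩, h, neg_pos.1 (hopp ▸ h)⟩
  obtain ⟨u, v, hu, hv, hone⟩ :=
    exists_pos_neg_card_separating_eq_one sep mass hmass hmass_eq hsplit hx hy
  refine ⟨u, v, fun i ↦ sub_ne_zero.2 (u.2 i), fun i ↦ sub_ne_zero.2 (v.2 i), ?_, hu, hv⟩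
  simpa only [hsep, Finset.singleton_iff_unique_mem] using Finset.card_eq_one.1 hone

end HamSandwich

section AffineFunctions

variable {ι K V P : Type*} [Fintype ι] [Field K] [LinearOrder K] [IsStrictOrderedRing K]
  [AddCommGroup V] [Module K V] [AddTorsor V P]

theorem hasBalancedCellOrWall_affineMap (p : ι → K) (f : ι → P →ᵃ[K] K)
    (hf : ∀ i, (f i).linear ≠ 0)
    (hdist : Pairwise fun i j ↦ {x | f i x = 0} ≠ {x | f j x = 0}) :
    HasBalancedCellOrWall p fun i x ↦ f i x := by
  obtain ⟨v, hv⟩ := Module.Dual.exists_forall_ne_zero_of_forall_exists _ fun i ↦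
    DFunLike.ne_iff.1 (hf i)
  obtain ⟨o, ho⟩ := exists_injective_neg_apply_div f hv hdist
  have hline : (fun i (u : K) ↦ f i (u • v +ᵥ o)) =
      fun i u ↦ (f i).linear v * (u - -f i o / (f i).linear v) := by
    ext i u
    calc f i (u • v +ᵥ o) = u * (f i).linear v + f i o := by simp
      _ = (f i).linear v * (u - -f i o / (f i).linear v) := by
        rw [mul_sub, mul_div_cancel₀ _ (hv i)]
        ring
  refine .of_comp (fun u : K ↦ u • v +ᵥ o) ?_
  rw [hline]
  exact .const_mul hv (hasBalancedCellOrWall_sub _ ho)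

theorem stmt_13_general (f : ι → P →ᵃ[K] K) (hf : ∀ i, (f i).linear ≠ 0)
    (hdist : Pairwise fun i j ↦ {x | f i x = 0} ≠ {x | f j x = 0}) (p : ι → K) :
    (∃ σ : ι → K, (∀ i, σ i = 1 ∨ σ i = -1) ∧ (∃ x, ∀ i, 0 < σ i * f i x) ∧
      ∑ i, p i * σ i = 0) ∨
    (∃ σ σ' : ι → K, (∀ i, σ i = 1 ∨ σ i = -1) ∧ (∀ i, σ' i = 1 ∨ σ' i = -1) ∧
      (∃ x, ∀ i, 0 < σ i * f i x) ∧ (∃ x, ∀ i, 0 < σ' i * f i x) ∧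
      (∃! i, σ i ≠ σ' i) ∧ 0 < ∑ i, p i * σ i ∧ ∑ i, p i * σ' i < 0) := by
  rcases hasBalancedCellOrWall_affineMap p f hf hdist with
    ⟨x, hx, hmass⟩ | ⟨x, y, hx, hy, hwall, hpos, hneg⟩
  · exact .inl ⟨fun i ↦ sign (f i x), fun i ↦ coe_sign_eq_one_or_neg_one (hx i),
      ⟨x, fun i ↦ coe_sign_mul_self_pos (hx i)⟩, hmass⟩
  · exact .inr ⟨fun i ↦ sign (f i x), fun i ↦ sign (f i y),
      fun i ↦ coe_sign_eq_one_or_neg_one (hx i), fun i ↦ coe_sign_eq_one_or_neg_one (hy i),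
      ⟨x, fun i ↦ coe_sign_mul_self_pos (hx i)⟩, ⟨y, fun i ↦ coe_sign_mul_self_pos (hy i)⟩,
      by simpa only [ne_eq, signType_coe_injective.eq_iff] using hwall, hpos, hneg⟩

end AffineFunctions

/-- Ham-sandwich lemma for hyperplane arrangements (Lemma 4): for any probability
vector `p` over the hyperplanes, either some realized cell has zero signed `p`-mass,
or there exist two neighboring realized cells with signed `p`-masses of opposite
strict signs. -/
theorem stmt_13
    {d n : ℕ} (hd : 1 ≤ d)
    (w : Fin n → Fin d → ℝ) (b : Fin n → ℝ)
    (hw : ∀ i, w i ≠ 0)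
    (hdist : ∀ i j : Fin n, i ≠ j →
      {x : Fin d → ℝ | (∑ k, w i k * x k) + b i = 0} ≠
        {x : Fin d → ℝ | (∑ k, w j k * x k) + b j = 0})
    (p : Fin n → ℝ) (hp : ∀ i, 0 ≤ p i) (hpsum : ∑ i, p i = 1) :
    (∃ σ : Fin n → ℝ, (∀ i, σ i = 1 ∨ σ i = -1) ∧
      (∃ x : Fin d → ℝ, ∀ i, 0 < σ i * ((∑ k, w i k * x k) + b i)) ∧
      ∑ i, p i * σ i = 0) ∨
    (∃ σ σ' : Fin n → ℝ,
      (∀ i, σ i = 1 ∨ σ i = -1) ∧ (∀ i, σ' i = 1 ∨ σ' i = -1) ∧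
      (∃ x : Fin d → ℝ, ∀ i, 0 < σ i * ((∑ k, w i k * x k) + b i)) ∧
      (∃ x : Fin d → ℝ, ∀ i, 0 < σ' i * ((∑ k, w i k * x k) + b i)) ∧
      (∃! i : Fin n, σ i ≠ σ' i) ∧
      0 < ∑ i, p i * σ i ∧ ∑ i, p i * σ' i < 0) := by
  exact stmt_13_general
    (fun i ↦ (dotProductEquiv ℝ (Fin d) (w i)).toAffineMap + AffineMap.const ℝ _ (b i))
    (fun i ↦ by simpa using hw i) (fun i j ↦ hdist i j) p
end

section
/- (Single-step contraction for the relaxed-greedy teacher.) In the teacher-update setting, let p be the current teacher posterior on H with p(h*) < 1, and for an example x with h(x) ≠ 0 for all h ∈ H define: q(x) = Σ_{h : sign(h(x)) = +1} p(h); δ(x) = Σ_{h : sign(h(x)) = sign(h*(x))} p(h); Z(x) = δ(x) + (1 − δ(x))·w_o; and the post-update ratio r(x) = (Z(x) − p(h*)) / p(h*) (i.e. the value of η after a single update of p with example x and its true label sign(h*(x))). Let η = (1 − p(h*)) / p(h*). Then: (i) if q(x) = 1/2, then r(x) ≤ ((3 + w_o)/4) · η; and (ii) if x, x' are two examples with q(x)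 > 1/2 > q(x') whose sign vectors (sign(h(x)))_{h∈H} and (sign(h(x')))_{h∈H} differ for exactly one hypothesis h₀ ∈ H, then (r(x) + r(x'))/2 ≤ ((3 + w_o)/4) · η. -/
open scoped Classical BigOperators

/-!
For two examples with agreement masses `δ` and `δ'`, the bound on the averaged ratio amounts to
`δ + δ' ≤ (3 + p t) / 2`. If the target `t` gets the same label in both examples, one of `δ`, `δ'`
is at most `1 / 2`, because the mass of the reference label crosses `1 / 2`, and the other is at
most `1`. If the target gets different labels, every hypothesis that agrees with the target on both
examples lies in the disagreement set of the two labelings, so inclusion–exclusion gives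
`δ + δ' ≤ 1 + (mass of the disagreement set)`. A single balanced example is the case of two equal
labelings.
-/

theorem sum_filter_eq_of_existsUnique {ι M : Type*} [Fintype ι] [AddCommMonoid M]
    {P : ι → Prop} [DecidablePred P] (hP : ∃! i, P i) {i : ι} (hi : P i) (f : ι → M) :
    ∑ j with P j, f j = f i := by
  have filter_eq : Finset.univ.filter P = {i} := by
    ext j
    simpa using ⟨fun hj => hP.unique hj hi, fun hj => hj ▸ hi⟩
  rw [filter_eq, Finset.sum_singleton]

theorem sum_le_one_of_mem_stdSimplex {𝕜 ι : Type*} [Semiring 𝕜] [PartialOrder 𝕜]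
    [IsOrderedAddMonoid 𝕜] [Fintype ι] {p : ι → 𝕜} (hp : p ∈ stdSimplex 𝕜 ι) (S : Finset ι) :
    ∑ i ∈ S, p i ≤ 1 :=
  hp.2 ▸ Finset.sum_le_univ_sum_of_nonneg hp.1

section Labeling

variable {H α : Type*} [Fintype H] [DecidableEq α] {p : H → ℝ} {s s' : H → α} {a b c : α}

/-- The mass under `p` of the hypotheses to which the labeling `s` assigns the label `c`. With
`s h = sign (h x)` this is `q x` for `c = 1`, and `δ x` for the target's label `c = s t`. -/
def labelMass (p : H → ℝ) (s : H → α) (c : α) : ℝ :=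
  ∑ h with s h = c, p h

theorem labelMass_add_labelMass_le_one_add_disagreement (hp : p ∈ stdSimplex ℝ H) (hab : a ≠ b) :
    labelMass p s a + labelMass p s' b ≤ 1 + ∑ h with s h ≠ s' h, p h := by
  have inter_subset : Finset.univ.filter (s · = a) ∩ Finset.univ.filter (s' · = b) ⊆
      Finset.univ.filter (fun h => s h ≠ s' h) := by
    intro h hh
    simp only [Finset.mem_inter, Finset.mem_filter, Finset.mem_univ, true_and] at hh ⊢
    rwa [hh.1, hh.2]
  rw [labelMass, labelMass, ← Finset.sum_union_inter]
  exact add_le_add (sum_le_one_of_mem_stdSimplex hp _)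
    (Finset.sum_le_sum_of_subset_of_nonneg inter_subset fun h _ _ => hp.1 h)

theorem labelMass_add_labelMass_le_one (hp : p ∈ stdSimplex ℝ H) (hab : a ≠ b) :
    labelMass p s a + labelMass p s b ≤ 1 := by
  simpa using labelMass_add_labelMass_le_one_add_disagreement (s := s) (s' := s) hp hab

theorem labelMass_add_labelMass_le_three_halves (hp : p ∈ stdSimplex ℝ H)
    (hs : 1 / 2 ≤ labelMass p s c) (hs' : labelMass p s' c ≤ 1 / 2) (a : α) :
    labelMass p s a + labelMass p s' a ≤ 3 / 2 := by
  have le_one (u : H → α) : labelMass p u a ≤ 1 := sum_le_one_of_mem_stdSimplex hp _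
  rcases eq_or_ne a c with rfl | hac
  · linarith [le_one s]
  · have := labelMass_add_labelMass_le_one (s := s) hp hac
    linarith [le_one s']

/-- The value of `η = (1 - p t) / p t` after updating `p` with an example labeled by `s` and its
true label `s t`, i.e. `(Z - p t) / p t` for the normalizer `Z = δ + (1 - δ) * w`. -/
noncomputable def postUpdateRatio (p : H → ℝ) (w : ℝ) (s : H → α) (t : H) : ℝ :=
  (labelMass p s (s t) + (1 - labelMass p s (s t)) * w - p t) / p t

theorem postUpdateRatio_average_le {t : H} (ht : 0 < p t) {w : ℝ} (hw : w ≤ 1)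
    (hδ : labelMass p s (s t) + labelMass p s' (s' t) ≤ (3 + p t) / 2) :
    (postUpdateRatio p w s t + postUpdateRatio p w s' t) / 2 ≤
      (3 + w) / 4 * ((1 - p t) / p t) := by
  have normalizer_average_le :
      (labelMass p s (s t) + labelMass p s' (s' t)) / 2 * (1 - w) + w - p t ≤
        (3 + w) / 4 * (1 - p t) := by
    linarith [mul_le_mul_of_nonneg_right hδ (sub_nonneg.2 hw)]
  calc (postUpdateRatio p w s t + postUpdateRatio p w s' t) / 2
      = ((labelMass p s (s t) + labelMass p s' (s' t)) / 2 * (1 - w) + w - p t) / p t := by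
        rw [postUpdateRatio, postUpdateRatio]; ring
    _ ≤ (3 + w) / 4 * (1 - p t) / p t := by gcongr
    _ = (3 + w) / 4 * ((1 - p t) / p t) := mul_div_assoc ..

theorem stmt_14_general (hp : p ∈ stdSimplex ℝ H) {t : H} (ht : 0 < p t) {w : ℝ} (hw : w ≤ 1)
    (hs : 1 / 2 ≤ labelMass p s c) (hs' : labelMass p s' c ≤ 1 / 2)
    (hdisagree : s t ≠ s' t → ∑ h with s h ≠ s' h, p h ≤ (1 + p t) / 2) :
    (postUpdateRatio p w s t + postUpdateRatio p w s' t) / 2 ≤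
      (3 + w) / 4 * ((1 - p t) / p t) := by
  apply postUpdateRatio_average_le ht hw
  by_cases hst : s t = s' t
  · have := labelMass_add_labelMass_le_three_halves hp hs hs' (s' t)
    rw [hst]
    linarith
  · have := labelMass_add_labelMass_le_one_add_disagreement (s := s) (s' := s') hp hst
    linarith [hdisagree hst]

end Labeling

/-- Single-step contraction for the relaxed-greedy teacher: (i) if the shown example
splits the posterior mass in half, the post-update ratio contracts by `(3+w_o)/4`;
(ii) the same holds on average for two bipolar examples from neighboring cells. -/
theorem stmt_14
    {H X : Type*} [Fintype H]
    (hyp : H → X → ℝ) (hstar : H)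
    (p : H → ℝ) (hppos : ∀ h, 0 < p h) (hpsum : ∑ h, p h = 1)
    (hplt : p hstar < 1)
    (w_o : ℝ) (hw0 : 0 ≤ w_o) (hw1 : w_o < 1)
    (q δ Z r : X → ℝ)
    (hq : ∀ x, q x =
      ∑ h ∈ Finset.univ.filter (fun h => Real.sign (hyp h x) = 1), p h)
    (hδ : ∀ x, δ x =
      ∑ h ∈ Finset.univ.filter
        (fun h => Real.sign (hyp h x) = Real.sign (hyp hstar x)), p h)
    (hZ : ∀ x, Z x = δ x + (1 - δ x) * w_o)
    (hr : ∀ x, r x = (Z x - p hstar) / p hstar)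
    (η : ℝ) (hη : η = (1 - p hstar) / p hstar) :
    (∀ x : X, (∀ h, hyp h x ≠ 0) → q x = 1 / 2 →
      r x ≤ (3 + w_o) / 4 * η) ∧
    (∀ x x' : X, (∀ h, hyp h x ≠ 0) → (∀ h, hyp h x' ≠ 0) →
      1 / 2 < q x → q x' < 1 / 2 →
      (∃! h0 : H, Real.sign (hyp h0 x) ≠ Real.sign (hyp h0 x')) →
      (r x + r x') / 2 ≤ (3 + w_o) / 4 * η) := by
  have hp : p ∈ stdSimplex ℝ H := ⟨fun h => (hppos h).le, hpsum⟩
  have hqx (x : X) : q x = labelMass p (fun h => Real.sign (hyp h x)) 1 := hq x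
  have hrx (x : X) : r x = postUpdateRatio p w_o (fun h => Real.sign (hyp h x)) hstar := by
    rw [hr, hZ, hδ, postUpdateRatio, labelMass]
  simp only [hqx, hrx, hη]
  constructor
  · intro x _ hx
    simpa only [add_self_div_two] using
      stmt_14_general hp (hppos hstar) hw1.le hx.ge hx.le (absurd rfl)
  · intro x x' _ _ hx hx' hunique
    refine stmt_14_general hp (hppos hstar) hw1.le hx.le hx'.le fun hstar_disagrees => ?_
    rw [sum_filter_eq_of_existsUnique hunique hstar_disagrees]
    linarith
end

section
/- (Existence of a short teaching sequence; consequence of Theorem 3 via the probabilistic method.) Let H be a finite class of affine separators h(x) = w_hᵀx + b_h on ℝ^d (non-constant, with pairwise distinct zero hyperplanes) containing a target h*, let P0 be a prior on H with 0 < P0(h*) < 1, fix w_o with 0 ≤ w_o < 1 and ε ∈ (0,1), and let m be an integer with m ≥ (4/(1 − w_o)) · ln( 2·(1−ε)·(1 − P0(h*)) / (ε · P0(h*)) ). If the teaching set X ⊆ ℝ^d is m-rich and no hypothesis vanishes on any example of X, then there exists a sequence x_1, …, x_m of examples from X such that after m teacher updates the posterior satisfies 1 − p_m(h*) ≤ ε.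 -/
open scoped Classical BigOperators

/-!
The target hyperplane contains a point `z` lying on no other hyperplane of the class, and a short
segment through `z` transverse to it joins two cells `a`, `b` separated by the target hyperplane
alone. A hypothesis other than the target errs on exactly one of `a`, `b`, so a uniformly random
choice between them multiplies its unnormalized weight by `(1 + w_o) / 2` on average, while the
weight of the target is unchanged. Choosing at each step the better of the two examples keeps the
total competing weight below `((1 + w_o) / 2) ^ m * (1 - P0 h*)` after `m` steps, and the bound on
`m` makes this small against `P0 h*`.
-/

section AffineFunctions

variable {K V E ι : Type*} [Field K] [AddCommGroup V] [Module K V] [AddTorsor V E]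

lemma affineMap_surjective_of_linear_ne_zero {f : E →ᵃ[K] K} (hf : f.linear ≠ 0) :
    Function.Surjective f :=
  f.linear_surjective_iff.1 (LinearMap.surjective hf)

lemma zeroSet_eq_of_subset {f g : E →ᵃ[K] K} (hf : f.linear ≠ 0) (hg : g.linear ≠ 0)
    (hsub : {x | f x = 0} ⊆ {x | g x = 0}) : {x | f x = 0} = {x | g x = 0} := by
  refine hsub.antisymm fun x (hgx : g x = 0) ↦ ?_
  by_contra hfx
  obtain ⟨z, hfz⟩ := affineMap_surjective_of_linear_ne_zero hf 0
  obtain ⟨y, hgy⟩ := affineMap_surjective_of_linear_ne_zero hg 1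
  -- Moving `y` parallel to the line `zx`, on which `g` vanishes, brings it to the zero set of `f`.
  have hfy : f ((-(f y / f x)) • (x -ᵥ z) +ᵥ y) = 0 := by
    rw [f.map_vadd, map_smul, f.linearMap_vsub, hfz]
    simp [div_mul_cancel₀ _ hfx]
  have hgy' : g ((-(f y / f x)) • (x -ᵥ z) +ᵥ y) = g y := by
    rw [g.map_vadd, map_smul, g.linearMap_vsub, hgx, hsub hfz]
    simp
  exact one_ne_zero (hgy.symm.trans (hgy'.symm.trans (hsub hfy)))

lemma exists_lineMap_forall_ne_zero [Infinite K] {g : ι → E →ᵃ[K] K} {S : Finset ι} {x y : E}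
    (h : ∀ i ∈ S, g i x ≠ 0 ∨ g i y ≠ 0) :
    ∃ t : K, ∀ i ∈ S, g i (AffineMap.lineMap x y t) ≠ 0 := by
  obtain ⟨t, ht⟩ := Infinite.exists_notMem_finset (S.image fun i ↦ -g i x / (g i y - g i x))
  refine ⟨t, fun i hi hzero ↦ ?_⟩
  rw [AffineMap.apply_lineMap, AffineMap.lineMap_apply_ring'] at hzero
  by_cases hconst : g i y - g i x = 0
  · have hx : g i x = 0 := by simpa [hconst] using hzero
    have hy : g i y = 0 := by simpa [hx] using hconst
    exact (h i hi).elim (· hx) (· hy)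
  · refine ht (Finset.mem_image.2 ⟨i, hi, ?_⟩)
    rw [div_eq_iff hconst, eq_neg_of_add_eq_zero_left hzero]

lemma exists_mem_forall_ne_zero [Infinite K] {A : AffineSubspace K E} (hA : (A : Set E).Nonempty)
    {g : ι → E →ᵃ[K] K} {S : Finset ι} (h : ∀ i ∈ S, ∃ x ∈ A, g i x ≠ 0) :
    ∃ x ∈ A, ∀ i ∈ S, g i x ≠ 0 := by
  induction S using Finset.induction_on with
  | empty => exact hA.imp fun x hx ↦ ⟨hx, by simp⟩
  | insert k S _ ih =>
    obtain ⟨x, hxA, hx⟩ := ih fun i hi ↦ h i (Finset.mem_insert_of_mem hi)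
    obtain ⟨y, hyA, hy⟩ := h k (Finset.mem_insert_self k S)
    have hxy : ∀ i ∈ insert k S, g i x ≠ 0 ∨ g i y ≠ 0 := by
      simp only [Finset.forall_mem_insert]
      exact ⟨.inr hy, fun i hi ↦ .inl (hx i hi)⟩
    obtain ⟨t, ht⟩ := exists_lineMap_forall_ne_zero hxy
    exact ⟨_, AffineMap.lineMap_mem t hxA hyA, ht⟩

lemma exists_eq_zero_forall_ne_zero [Infinite K] [Finite ι] {f : ι → E →ᵃ[K] K} {j : ι}
    (hj : (f j).linear ≠ 0) (hsub : ∀ i ≠ j, ¬ {x | f j x = 0} ⊆ {x | f i x = 0}) :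
    ∃ z, f j z = 0 ∧ ∀ i ≠ j, f i z ≠ 0 := by
  have := Fintype.ofFinite ι
  let A : AffineSubspace K E := (affineSpan K {(0 : K)}).comap (f j)
  have mem_A : ∀ x, x ∈ A ↔ f j x = 0 := fun x ↦ by
    simp only [A, AffineSubspace.mem_comap, AffineSubspace.mem_affineSpan_singleton]
  obtain ⟨z₀, hz₀⟩ := affineMap_surjective_of_linear_ne_zero hj 0
  obtain ⟨z, hzA, hz⟩ := exists_mem_forall_ne_zero (S := Finset.univ.erase j) (g := f)
    ⟨z₀, (mem_A z₀).2 hz₀⟩ fun i hi ↦ by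
      simpa [Set.not_subset, mem_A] using hsub i (Finset.ne_of_mem_erase hi)
  exact ⟨z, (mem_A z).1 hzA, fun i hi ↦ hz i (Finset.mem_erase_of_ne_of_mem hi (Finset.mem_univ i))⟩

/-- The affine function `x ↦ wᵀx + b` on coordinate space. -/
noncomputable def affineSeparator {κ : Type*} [Fintype κ] (w : κ → ℝ) (b : ℝ) :
    (κ → ℝ) →ᵃ[ℝ] ℝ :=
  (dotProductEquiv ℝ κ w).toAffineMap + AffineMap.const ℝ (κ → ℝ) b

lemma affineSeparator_apply {κ : Type*} [Fintype κ] (w : κ → ℝ) (b : ℝ) (x : κ → ℝ) :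
    affineSeparator w b x = (∑ k, w k * x k) + b :=
  rfl

lemma affineSeparator_linear_ne_zero {κ : Type*} [Fintype κ] {w : κ → ℝ} (hw : w ≠ 0) (b : ℝ) :
    (affineSeparator w b).linear ≠ 0 := by
  simpa [affineSeparator] using hw

end AffineFunctions

section Cells

variable {ι α : Type*}

/-- The set `X` meets every cell of the arrangement of zero sets of the `f i`. -/
def MeetsEveryCell (f : ι → α → ℝ) (X : Set α) : Prop :=
  ∀ x₀, (∀ i, f i x₀ ≠ 0) → ∃ x ∈ X, ∀ i, Real.sign (f i x) = Real.sign (f i x₀)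

/-- The points `a` and `b` lie in cells separated by the zero set of `f j` and by no other. That
`b` lies on no zero set follows from the sign conditions. -/
structure IsAdjacentAcross (f : ι → α → ℝ) (j : ι) (a b : α) : Prop where
  ne_zero : ∀ i, f i a ≠ 0
  sign_eq : ∀ i ≠ j, Real.sign (f i b) = Real.sign (f i a)
  sign_eq_neg : Real.sign (f j b) = -Real.sign (f j a)

lemma ne_zero_of_sign_eq {x y : ℝ} (h : Real.sign x = Real.sign y) (hy : y ≠ 0) : x ≠ 0 := by
  rwa [ne_eq, ← Real.sign_eq_zero_iff, h, Real.sign_eq_zero_iff]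

lemma eventually_sign_eq {x : ℝ} (hx : x ≠ 0) : ∀ᶠ y in nhds x, Real.sign y = Real.sign x := by
  rcases hx.lt_or_gt with hneg | hpos
  · filter_upwards [eventually_lt_nhds hneg] with y hy
    rw [Real.sign_of_neg hneg, Real.sign_of_neg hy]
  · filter_upwards [eventually_gt_nhds hpos] with y hy
    rw [Real.sign_of_pos hpos, Real.sign_of_pos hy]

namespace IsAdjacentAcross

variable {f : ι → α → ℝ} {j : ι} {a b : α}

lemma ne_zero_right (h : IsAdjacentAcross f j a b) (i : ι) : f i b ≠ 0 := by
  by_cases hi : i = j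
  · rw [hi, ne_eq, ← Real.sign_eq_zero_iff, h.sign_eq_neg, neg_eq_zero, Real.sign_eq_zero_iff]
    exact h.ne_zero j
  · exact ne_zero_of_sign_eq (h.sign_eq i hi) (h.ne_zero i)

lemma ne (h : IsAdjacentAcross f j a b) : a ≠ b := by
  rintro rfl
  exact h.ne_zero j (Real.sign_eq_zero_iff.1 (self_eq_neg.1 h.sign_eq_neg))

lemma congr {a' b' : α} (h : IsAdjacentAcross f j a b)
    (ha : ∀ i, Real.sign (f i a') = Real.sign (f i a))
    (hb : ∀ i, Real.sign (f i b') = Real.sign (f i b)) : IsAdjacentAcross f j a' b' where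
  ne_zero i := ne_zero_of_sign_eq (ha i) (h.ne_zero i)
  sign_eq i hi := by rw [ha, hb, h.sign_eq i hi]
  sign_eq_neg := by rw [ha, hb, h.sign_eq_neg]

end IsAdjacentAcross

lemma MeetsEveryCell.exists_isAdjacentAcross {f : ι → α → ℝ} {X : Set α} (hX : MeetsEveryCell f X)
    {j : ι} {a b : α} (h : IsAdjacentAcross f j a b) :
    ∃ a' ∈ X, ∃ b' ∈ X, IsAdjacentAcross f j a' b' := by
  obtain ⟨a', ha'X, ha'⟩ := hX a h.ne_zero
  obtain ⟨b', hb'X, hb'⟩ := hX b h.ne_zero_right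
  exact ⟨a', ha'X, b', hb'X, h.congr ha' hb'⟩

-- Richness is void for `m = 0`; then no example is shown and any point may serve as one.
lemma meetsEveryCell_of_le_card {f : ι → α → ℝ} {X : Finset α} {m : ℕ}
    [∀ x₀, DecidablePred fun x ↦ ∀ i, Real.sign (f i x) = Real.sign (f i x₀)]
    (hX : ∀ x₀, (∀ i, f i x₀ ≠ 0) →
      m ≤ (X.filter fun x ↦ ∀ i, Real.sign (f i x) = Real.sign (f i x₀)).card) :
    MeetsEveryCell f {x | 0 < m → x ∈ X} := by
  intro x₀ hx₀
  rcases m.eq_zero_or_pos with rfl | hm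
  · exact ⟨x₀, by simp, fun _ ↦ rfl⟩
  · obtain ⟨x, hx⟩ := Finset.card_pos.1 (hm.trans_le (hX x₀ hx₀))
    obtain ⟨hxX, hsign⟩ := Finset.mem_filter.1 hx
    exact ⟨x, fun _ ↦ hxX, hsign⟩

variable {V E : Type*} [AddCommGroup V] [Module ℝ V] [AddTorsor V E]

lemma eventually_sign_lineMap_eq (g : E →ᵃ[ℝ] ℝ) {z : E} (hz : g z ≠ 0) (u : E) :
    ∀ᶠ t : ℝ in nhds 0, Real.sign (g (AffineMap.lineMap z u t)) = Real.sign (g z) := by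
  have hcont : Continuous fun t : ℝ ↦ g (AffineMap.lineMap z u t) := by
    simp only [AffineMap.apply_lineMap, AffineMap.lineMap_apply_ring']
    fun_prop
  have hlim := hcont.tendsto 0
  rw [AffineMap.lineMap_apply_zero] at hlim
  exact hlim.eventually (eventually_sign_eq hz)

lemma exists_isAdjacentAcross_of_eq_zero [Finite ι] {f : ι → E →ᵃ[ℝ] ℝ} {j : ι} {z : E}
    (hj : (f j).linear ≠ 0) (hzj : f j z = 0) (hz : ∀ i ≠ j, f i z ≠ 0) :
    ∃ a b, IsAdjacentAcross (fun i ↦ f i) j a b := by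
  obtain ⟨u, hu⟩ := affineMap_surjective_of_linear_ne_zero hj 1
  have hsign : ∀ᶠ t : ℝ in nhds 0, ∀ i ≠ j,
      Real.sign (f i (AffineMap.lineMap z u t)) = Real.sign (f i z) := by
    simp only [Filter.eventually_all]
    exact fun i hi ↦ eventually_sign_lineMap_eq (f i) (hz i hi) u
  have hsign_neg := (continuous_neg.tendsto' (0 : ℝ) 0 neg_zero).eventually hsign
  obtain ⟨t, ⟨ht, ht_neg⟩, ht0⟩ :=
    ((hsign.and hsign_neg).filter_mono nhdsWithin_le_nhds |>.and
      (self_mem_nhdsWithin : {(0 : ℝ)}ᶜ ∈ nhdsWithin 0 {0}ᶜ)).exists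
  have hfj : ∀ s : ℝ, f j (AffineMap.lineMap z u s) = s := fun s ↦ by
    rw [AffineMap.apply_lineMap, AffineMap.lineMap_apply_ring', hzj, hu]
    ring
  refine ⟨AffineMap.lineMap z u t, AffineMap.lineMap z u (-t), fun i ↦ ?_,
    fun i hi ↦ (ht_neg i hi).trans (ht i hi).symm, ?_⟩
  · by_cases hi : i = j
    · rw [hi, hfj]
      exact ht0
    · exact ne_zero_of_sign_eq (ht i hi) (hz i hi)
  · rw [hfj, hfj, Real.sign_neg]

lemma exists_isAdjacentAcross [Finite ι] {f : ι → E →ᵃ[ℝ] ℝ} {j : ι} (hj : (f j).linear ≠ 0)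
    (hsub : ∀ i ≠ j, ¬ {x | f j x = 0} ⊆ {x | f i x = 0}) :
    ∃ a b, IsAdjacentAcross (fun i ↦ f i) j a b := by
  obtain ⟨z, hzj, hz⟩ := exists_eq_zero_forall_ne_zero hj hsub
  exact exists_isAdjacentAcross_of_eq_zero hj hzj hz

end Cells

section Feedback

variable {ι α : Type*} {f : ι → α → ℝ} {j : ι}

/-- The factor by which the example `x`, labelled by the target `f j`, multiplies the weight of the
hypothesis `f i`: it is `1` if the two agree in sign at `x` and `w` if they have opposite signs.
At a zero of either of them the exponent is `1 / 2`. -/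
noncomputable def feedbackFactor (w : ℝ) (f : ι → α → ℝ) (j : ι) (x : α) (i : ι) : ℝ :=
  w ^ ((1 - Real.sign (f i x) * Real.sign (f j x)) / 2)

lemma feedbackFactor_nonneg {w : ℝ} (hw : 0 ≤ w) (x : α) (i : ι) : 0 ≤ feedbackFactor w f j x i :=
  Real.rpow_nonneg hw _

lemma feedbackFactor_target (w : ℝ) {x : α} (hx : f j x ≠ 0) : feedbackFactor w f j x j = 1 := by
  rcases Real.sign_apply_eq_of_ne_zero _ hx with h | h <;> simp [feedbackFactor, h]

lemma IsAdjacentAcross.feedbackFactor_add {a b : α} (h : IsAdjacentAcross f j a b) (w : ℝ) {i : ι}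
    (hi : i ≠ j) : feedbackFactor w f j a i + feedbackFactor w f j b i = 1 + w := by
  simp only [feedbackFactor, h.sign_eq i hi, h.sign_eq_neg]
  rcases Real.sign_apply_eq_of_ne_zero _ (h.ne_zero i) with hsi | hsi <;>
    rcases Real.sign_apply_eq_of_ne_zero _ (h.ne_zero j) with hsj | hsj <;>
    norm_num [hsi, hsj, add_comm]

end Feedback

section Derandomization

variable {K α ι : Type*} [Field K] [LinearOrder K] [IsStrictOrderedRing K]
  {A : Finset α} {S : Finset ι} {F : α → ι → K} {r : K}

lemma exists_sum_mul_le_mul_sum (hA : A.Nonempty) (hF : ∀ i ∈ S, ∑ x ∈ A, F x i ≤ A.card * r)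
    {P : ι → K} (hP : ∀ i ∈ S, 0 ≤ P i) :
    ∃ x ∈ A, ∑ i ∈ S, P i * F x i ≤ r * ∑ i ∈ S, P i := by
  refine Finset.exists_le_of_sum_le hA ?_
  calc ∑ x ∈ A, ∑ i ∈ S, P i * F x i
      = ∑ i ∈ S, P i * ∑ x ∈ A, F x i := by simp only [Finset.sum_comm (s := A), Finset.mul_sum]
    _ ≤ ∑ i ∈ S, P i * (A.card * r) :=
        Finset.sum_le_sum fun i hi ↦ mul_le_mul_of_nonneg_left (hF i hi) (hP i hi)
    _ = ∑ _x ∈ A, r * ∑ i ∈ S, P i := by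
        rw [← Finset.sum_mul, Finset.sum_const, nsmul_eq_mul]
        ring

lemma exists_seq_sum_mul_prod_le (hA : A.Nonempty) (hr : 0 ≤ r)
    (hF0 : ∀ x ∈ A, ∀ i ∈ S, 0 ≤ F x i) (hF : ∀ i ∈ S, ∑ x ∈ A, F x i ≤ A.card * r)
    {P : ι → K} (hP : ∀ i ∈ S, 0 ≤ P i) (n : ℕ) :
    ∃ xs : ℕ → α, (∀ t, xs t ∈ A) ∧
      ∑ i ∈ S, P i * ∏ t ∈ Finset.range n, F (xs t) i ≤ r ^ n * ∑ i ∈ S, P i := by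
  induction n generalizing P with
  | zero => exact hA.elim fun x hx ↦ ⟨fun _ ↦ x, fun _ ↦ hx, by simp⟩
  | succ n ih =>
    obtain ⟨x, hxA, hx⟩ := exists_sum_mul_le_mul_sum hA hF hP
    obtain ⟨xs, hxsA, hxs⟩ := ih (P := fun i ↦ P i * F x i) fun i hi ↦
      mul_nonneg (hP i hi) (hF0 x hxA i hi)
    refine ⟨fun t ↦ t.casesOn x xs, fun t ↦ ?_, ?_⟩
    · cases t with
      | zero => exact hxA
      | succ t => exact hxsA t
    · calc ∑ i ∈ S, P i * ∏ t ∈ Finset.range (n + 1), F (t.casesOn x xs) i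
          = ∑ i ∈ S, P i * F x i * ∏ t ∈ Finset.range n, F (xs t) i := by
            refine Finset.sum_congr rfl fun i _ ↦ ?_
            rw [Finset.prod_range_succ', mul_assoc, mul_comm (F x i)]
            rfl
        _ ≤ r ^ n * ∑ i ∈ S, P i * F x i := hxs
        _ ≤ r ^ n * (r * ∑ i ∈ S, P i) := mul_le_mul_of_nonneg_left hx (pow_nonneg hr n)
        _ = r ^ (n + 1) * ∑ i ∈ S, P i := by rw [pow_succ, mul_assoc]

lemma IsAdjacentAcross.exists_seq_sum_mul_prod_feedbackFactor_le {f : ι → α → ℝ} {j : ι} {a b : α}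
    (h : IsAdjacentAcross f j a b) {w : ℝ} (hw : 0 ≤ w) (hjS : j ∉ S) {P : ι → ℝ}
    (hP : ∀ i ∈ S, 0 ≤ P i) (n : ℕ) :
    ∃ xs : ℕ → α, (∀ t, xs t = a ∨ xs t = b) ∧
      ∑ i ∈ S, P i * ∏ t ∈ Finset.range n, feedbackFactor w f j (xs t) i ≤
        ((1 + w) / 2) ^ n * ∑ i ∈ S, P i := by
  have hmean : ∀ i ∈ S,
      ∑ x ∈ {a, b}, feedbackFactor w f j x i ≤ ({a, b} : Finset α).card * ((1 + w) / 2) := by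
    intro i hi
    rw [Finset.sum_pair h.ne, Finset.card_pair h.ne,
      h.feedbackFactor_add w (ne_of_mem_of_not_mem hi hjS)]
    exact (mul_div_cancel₀ _ two_ne_zero).ge
  simpa only [Finset.mem_insert, Finset.mem_singleton] using
    exists_seq_sum_mul_prod_le (Finset.insert_nonempty a {b}) (by positivity)
      (fun x _ i _ ↦ feedbackFactor_nonneg hw x i) hmean hP n

end Derandomization

section Posterior

variable {K ι : Type*} [Fintype ι]

/-- The sequence `p` starts at the prior `P` and its first `m` steps are the normalized
multiplicative updates with factors `L 0, …, L (m - 1)`. -/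
structure IsPosteriorSeq [Field K] (P : ι → K) (L : ℕ → ι → K) (m : ℕ) (p : ℕ → ι → K) :
    Prop where
  zero : ∀ i, p 0 i = P i
  succ : ∀ t < m, ∀ i, p (t + 1) i = p t i * L t i / ∑ i', p t i' * L t i'

namespace IsPosteriorSeq

variable {P : ι → K} {L : ℕ → ι → K} {m : ℕ} {p : ℕ → ι → K}

lemma eq_div [Field K] (hp : IsPosteriorSeq P L m p) (hsum : ∑ i, P i = 1)
    (hZ : ∀ t < m, ∑ i, P i * ∏ s ∈ Finset.range t, L s i ≠ 0) {t : ℕ} (ht : t ≤ m) (i : ι) :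
    p t i = (P i * ∏ s ∈ Finset.range t, L s i) / ∑ i', P i' * ∏ s ∈ Finset.range t, L s i' := by
  induction t generalizing i with
  | zero => simp [hp.zero, hsum]
  | succ t ih =>
    have hnum : ∀ i, p t i * L t i = (P i * ∏ s ∈ Finset.range (t + 1), L s i) /
        ∑ i', P i' * ∏ s ∈ Finset.range t, L s i' := fun i ↦ by
      rw [ih (by omega), Finset.prod_range_succ]
      ring
    simp only [hp.succ t ht, hnum, ← Finset.sum_div, div_div_div_cancel_right₀ (hZ t ht)]

lemma one_sub_le [Field K] [LinearOrder K] [IsStrictOrderedRing K]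
    (hp : IsPosteriorSeq P L m p) (hsum : ∑ i, P i = 1) (hP : ∀ i, 0 ≤ P i)
    (hL : ∀ t i, 0 ≤ L t i) {j : ι} (hPj : 0 < P j) (hLj : ∀ t, L t j = 1) {ε : K}
    (hε : (1 - ε) * ∑ i ∈ Finset.univ.erase j, P i * ∏ t ∈ Finset.range m, L t i ≤ ε * P j) :
    1 - p m j ≤ ε := by
  let W : ℕ → K := fun t ↦ ∑ i ∈ Finset.univ.erase j, P i * ∏ s ∈ Finset.range t, L s i
  have hW : ∀ t, 0 ≤ W t := fun t ↦ Finset.sum_nonneg fun i _ ↦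
    mul_nonneg (hP i) (Finset.prod_nonneg fun s _ ↦ hL s i)
  have htarget : ∀ t, P j * ∏ s ∈ Finset.range t, L s j = P j := fun t ↦ by simp [hLj]
  have hZ : ∀ t, ∑ i, P i * ∏ s ∈ Finset.range t, L s i = P j + W t := fun t ↦ by
    rw [← Finset.add_sum_erase _ _ (Finset.mem_univ j), htarget]
  have hZpos : ∀ t, 0 < P j + W t := fun t ↦ add_pos_of_pos_of_nonneg hPj (hW t)
  rw [hp.eq_div hsum (fun t _ ↦ (hZ t).trans_ne (hZpos t).ne') le_rfl, htarget, hZ, sub_le_comm,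
    le_div_iff₀ (hZpos m)]
  linear_combination hε

end IsPosteriorSeq

end Posterior

lemma pow_le_inv_of_log_le {r A : ℝ} {n : ℕ} (hr : 0 ≤ r) (hA : 0 < A)
    (h : Real.log A ≤ n * (1 - r)) : r ^ n ≤ A⁻¹ :=
  calc r ^ n ≤ Real.exp (-(1 - r)) ^ n := by
        gcongr
        simpa using Real.one_sub_le_exp_neg (1 - r)
    _ = Real.exp (-(n * (1 - r))) := by rw [← Real.exp_nat_mul, mul_neg]
    _ ≤ Real.exp (-Real.log A) := by gcongr
    _ = A⁻¹ := by rw [Real.exp_neg, Real.exp_log hA]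

lemma midpoint_pow_mul_le_of_log_le {w ε P : ℝ} {m : ℕ} (hw0 : 0 ≤ w) (hw1 : w < 1) (hε0 : 0 < ε)
    (hε1 : ε < 1) (hP0 : 0 < P) (hP1 : P < 1)
    (hm : 4 / (1 - w) * Real.log (2 * (1 - ε) * (1 - P) / (ε * P)) ≤ m) :
    (1 - ε) * (((1 + w) / 2) ^ m * (1 - P)) ≤ ε * P := by
  have hw : 0 < 1 - w := sub_pos.2 hw1
  have hε : 0 < 1 - ε := sub_pos.2 hε1
  have hP : 0 < 1 - P := sub_pos.2 hP1
  have hlog : Real.log (2 * (1 - ε) * (1 - P) / (ε * P)) ≤ m * (1 - (1 + w) / 2) := by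
    rw [div_mul_eq_mul_div, div_le_iff₀ hw] at hm
    have : 0 ≤ m * (1 - w) := by positivity
    linarith
  calc (1 - ε) * (((1 + w) / 2) ^ m * (1 - P))
      ≤ (1 - ε) * ((2 * (1 - ε) * (1 - P) / (ε * P))⁻¹ * (1 - P)) := by
        gcongr
        exact pow_le_inv_of_log_le (by positivity) (by positivity) hlog
    _ = ε * P / 2 := by field_simp
    _ ≤ ε * P := half_le_self (by positivity)

theorem stmt_15_general {ι V E : Type*} [Fintype ι] [AddCommGroup V] [Module ℝ V] [AddTorsor V E]
    {f : ι → E →ᵃ[ℝ] ℝ} {j : ι} (hj : (f j).linear ≠ 0)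
    (hsub : ∀ i ≠ j, ¬ {x | f j x = 0} ⊆ {x | f i x = 0})
    {P : ι → ℝ} (hP : ∀ i, 0 ≤ P i) (hPj : 0 < P j) (hsum : ∑ i, P i = 1)
    {w : ℝ} (hw : 0 ≤ w) {ε : ℝ} (hε : ε ≤ 1) {m : ℕ}
    (hm : (1 - ε) * (((1 + w) / 2) ^ m * (1 - P j)) ≤ ε * P j)
    {X : Set E} (hX : MeetsEveryCell (fun i ↦ f i) X) :
    ∃ xs : ℕ → E, (∀ t, xs t ∈ X) ∧
      ∀ p, IsPosteriorSeq P (fun t ↦ feedbackFactor w (fun i ↦ f i) j (xs t)) m p →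
        1 - p m j ≤ ε := by
  obtain ⟨_, _, hadj⟩ := exists_isAdjacentAcross hj hsub
  obtain ⟨a, haX, b, hbX, hab⟩ := hX.exists_isAdjacentAcross hadj
  obtain ⟨xs, hxs, hle⟩ := hab.exists_seq_sum_mul_prod_feedbackFactor_le hw
    (Finset.notMem_erase j Finset.univ) (fun i _ ↦ hP i) m
  have hxsj : ∀ t, f j (xs t) ≠ 0 := fun t ↦ by
    rcases hxs t with h | h <;> rw [h]
    exacts [hab.ne_zero j, hab.ne_zero_right j]
  refine ⟨xs, fun t ↦ ?_, fun p hp ↦ ?_⟩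
  · rcases hxs t with h | h <;> rw [h] <;> assumption
  · rw [Finset.sum_erase_eq_sub (f := P) (Finset.mem_univ j), hsum] at hle
    exact hp.one_sub_le hsum hP (fun t ↦ feedbackFactor_nonneg hw (xs t)) hPj
      (fun t ↦ feedbackFactor_target w (hxsj t))
      ((mul_le_mul_of_nonneg_left hle (sub_nonneg.2 hε)).trans hm)

/-- Existence of a short teaching sequence for affine separators: if the teaching
set is `m`-rich with `m ≥ (4/(1-w_o))·ln(2(1-ε)(1-P0(h*))/(ε·P0(h*)))`, then there
is a sequence of `m` examples after which the teacher posterior puts mass at least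
`1 - ε` on the target. -/
theorem stmt_15
    {ι : Type*} [Fintype ι] {d : ℕ} (hd : 1 ≤ d)
    (w : ι → Fin d → ℝ) (b : ι → ℝ) (hw : ∀ i, w i ≠ 0)
    (hdist : ∀ i j : ι, i ≠ j →
      {x : Fin d → ℝ | (∑ k, w i k * x k) + b i = 0} ≠
        {x : Fin d → ℝ | (∑ k, w j k * x k) + b j = 0})
    (hyp : ι → (Fin d → ℝ) → ℝ)
    (hhyp : ∀ i x, hyp i x = (∑ k, w i k * x k) + b i)
    (istar : ι)
    (P0 : ι → ℝ) (hP0pos : ∀ i, 0 < P0 i) (hP0sum : ∑ i, P0 i = 1)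
    (hPlt : P0 istar < 1)
    (w_o : ℝ) (hw0 : 0 ≤ w_o) (hw1 : w_o < 1)
    (ε : ℝ) (hε0 : 0 < ε) (hε1 : ε < 1)
    (m : ℕ)
    (hm : (m : ℝ) ≥ 4 / (1 - w_o) *
      Real.log (2 * (1 - ε) * (1 - P0 istar) / (ε * P0 istar)))
    (X : Finset (Fin d → ℝ))
    (hXnz : ∀ x ∈ X, ∀ i, hyp i x ≠ 0)
    (hrich : ∀ x0 : Fin d → ℝ, (∀ i, hyp i x0 ≠ 0) →
      m ≤ (X.filter
        (fun x => ∀ i, Real.sign (hyp i x) = Real.sign (hyp i x0))).card) :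
    ∃ xs : ℕ → (Fin d → ℝ), (∀ t < m, xs t ∈ X) ∧
      ∀ p : ℕ → ι → ℝ, (∀ i, p 0 i = P0 i) →
        (∀ t < m, ∀ i, p (t + 1) i =
          p t i * w_o ^
            ((1 - Real.sign (hyp i (xs t)) * Real.sign (hyp istar (xs t))) / 2)
          / ∑ i', p t i' * w_o ^
            ((1 - Real.sign (hyp i' (xs t)) * Real.sign (hyp istar (xs t))) / 2)) →
        1 - p m istar ≤ ε := by
  let f : ι → (Fin d → ℝ) →ᵃ[ℝ] ℝ := fun i ↦ affineSeparator (w i) (b i)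
  obtain rfl : hyp = fun i ↦ ⇑(f i) :=
    funext₂ fun i x ↦ (hhyp i x).trans (affineSeparator_apply (w i) (b i) x).symm
  have hlinear i : (f i).linear ≠ 0 := affineSeparator_linear_ne_zero (hw i) (b i)
  have hsub : ∀ i ≠ istar, ¬ {x | f istar x = 0} ⊆ {x | f i x = 0} := fun i hi hle ↦
    hdist istar i hi.symm (zeroSet_eq_of_subset (hlinear istar) (hlinear i) hle)
  obtain ⟨xs, hxs, hpost⟩ := stmt_15_general (f := f) (hlinear istar) hsub (fun i ↦ (hP0pos i).le)
    (hP0pos istar) hP0sum hw0 hε1.le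
    (midpoint_pow_mul_le_of_log_le hw0 hw1 hε0 hε1 (hP0pos istar) hPlt hm)
    (meetsEveryCell_of_le_card (X := X) hrich)
  exact ⟨xs, fun t ht ↦ hxs t (Nat.zero_lt_of_lt ht), fun p hp0 hp ↦ hpost p ⟨hp0, hp⟩⟩
end
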